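/- Let β be a real constant and let w : ℝ → ℝ → ℝ be a smooth function of (x,t) with w_x(x,t) > 0 for all (x,t), satisfying the 4th potential Kupershmidt equation w_t = w_{5x} - 5·w_{xx}w_{4x}/w_x - (15/4)·w_{xxx}²/w_x + (65/4)·w_{xx}²w_{xxx}/w_x² - (135/16)·w_{xx}⁴/w_x³ + (5β/6)·(w_{xxx}/w_x - (7/4)·w_{xx}²/w_x²) - (5β²/36)·(1/w_x). Then h := -(4/3)·w_x^{-1/2} satisfies h_t = ∂_x[ h_{4x} - 5·h_xh_{xxx}/h + 5·h_x²h_{xx}/h² + (15β/32)·h²h_{xx} - (15β/32)·h·h_x² + (9β²/1024)·h⁵ ], where ∂_x denotes the partial derivative with respect to x of the bracketed expression. -/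

import Mathlib

/-!
Since `h = -(4/3) w_x^{-1/2}` never vanishes and `w_x = (16/9) h⁻²`, every `x`-derivative of `w` is
a rational expression in `h` and its `x`-derivatives. Substituting these, the 4th potential
Kupershmidt equation collapses to `w_t = F` with `F` of order four in `h`, and the `x`-derivative
of `F` is `-(32/9) h⁻³` times that of the flux in the 5th equation. On the other hand
`∂_x w_t = ∂_t w_x = -(32/9) h⁻³ h_t`.
-/

/-- Total `x`-derivative of a function of `(x, t)`. -/
noncomputable def dx (f : ℝ → ℝ → ℝ) : ℝ → ℝ → ℝ := fun x t => deriv (fun y => f y t) x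

/-- Total `t`-derivative of a function of `(x, t)`. -/
noncomputable def dt (f : ℝ → ℝ → ℝ) : ℝ → ℝ → ℝ := fun x t => deriv (fun s => f x s) t

/-- The 4th potential Kupershmidt equation with parameter `β`. -/
def Kup4 (β : ℝ) (w : ℝ → ℝ → ℝ) : Prop :=
  ∀ x t, dt w x t =
    dx (dx (dx (dx (dx w)))) x t
    - 5 * dx (dx w) x t * dx (dx (dx (dx w))) x t / dx w x t
    - (15/4) * (dx (dx (dx w)) x t)^2 / dx w x t
    + (65/4) * (dx (dx w) x t)^2 * dx (dx (dx w)) x t / (dx w x t)^2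
    - (135/16) * (dx (dx w) x t)^4 / (dx w x t)^3
    + (5*β/6) * (dx (dx (dx w)) x t / dx w x t - (7/4) * (dx (dx w) x t)^2 / (dx w x t)^2)
    - (5*β^2/36) * (1 / dx w x t)

theorem hasDerivAt_div_pow {𝕜 : Type*} [NontriviallyNormedField 𝕜] {f g : 𝕜 → 𝕜} {f' g' x : 𝕜}
    (hf : HasDerivAt f f' x) (hg : HasDerivAt g g' x) (hgx : g x ≠ 0) (n : ℕ) :
    HasDerivAt (fun y => f y / g y ^ n) (f' / g x ^ n - n * f x * g' / g x ^ (n + 1)) x := by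
  refine (hf.fun_div (hg.fun_pow n) (pow_ne_zero n hgx)).congr_deriv ?_
  cases n with
  | zero => simp
  | succ n =>
    simp only [Nat.add_sub_cancel]
    field_simp
    ring

theorem self_mul_const_mul_rpow_neg_half_sq {a : ℝ} (ha : 0 < a) (c : ℝ) :
    a * (c * a ^ (-(1 / 2) : ℝ)) ^ 2 = c ^ 2 := by
  have hsq : (a ^ (-(1 / 2) : ℝ)) ^ 2 = a⁻¹ := by
    rw [← Real.rpow_mul_natCast ha.le, ← Real.rpow_neg_one]
    norm_num
  rw [mul_pow, hsq, mul_left_comm, mul_inv_cancel₀ ha.ne', mul_one]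

section PartialDerivatives

variable {E : Type*} [NormedAddCommGroup E] [NormedSpace ℝ E] {F : ℝ × ℝ → E} {x t : ℝ}

theorem hasDerivAt_slice_fst (hF : DifferentiableAt ℝ F (x, t)) :
    HasDerivAt (fun y => F (y, t)) (fderiv ℝ F (x, t) (1, 0)) x :=
  hF.hasFDerivAt.comp_hasDerivAt x ((hasDerivAt_id x).prodMk (hasDerivAt_const x t))

theorem hasDerivAt_slice_snd (hF : DifferentiableAt ℝ F (x, t)) :
    HasDerivAt (fun s => F (x, s)) (fderiv ℝ F (x, t) (0, 1)) t :=
  hF.hasFDerivAt.comp_hasDerivAt t ((hasDerivAt_const t x).prodMk (hasDerivAt_id t))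

end PartialDerivatives

/-- Joint `C^n` regularity of a curried function of `(x, t)`. The order is a natural number, so that
each `x`-derivative lowers it by one. -/
def JointContDiff (n : ℕ) (f : ℝ → ℝ → ℝ) : Prop :=
  ContDiff ℝ n (fun p : ℝ × ℝ => f p.1 p.2)

namespace JointContDiff

variable {n : ℕ} {f : ℝ → ℝ → ℝ}

theorem differentiableAt (hf : JointContDiff (n + 1) f) (p : ℝ × ℝ) :
    DifferentiableAt ℝ (fun p : ℝ × ℝ => f p.1 p.2) p :=
  ContDiff.differentiable hf (by simp) p

theorem hasDerivAt_dx (hf : JointContDiff (n + 1) f) (x t : ℝ) :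
    HasDerivAt (fun y => f y t) (dx f x t) x :=
  (hasDerivAt_slice_fst (hf.differentiableAt (x, t))).differentiableAt.hasDerivAt

theorem hasDerivAt_dt (hf : JointContDiff (n + 1) f) (x t : ℝ) :
    HasDerivAt (fun s => f x s) (dt f x t) t :=
  (hasDerivAt_slice_snd (hf.differentiableAt (x, t))).differentiableAt.hasDerivAt

theorem dx_eq_fderiv (hf : JointContDiff (n + 1) f) :
    dx f = fun x t => fderiv ℝ (fun p : ℝ × ℝ => f p.1 p.2) (x, t) (1, 0) :=
  funext₂ fun x t => (hasDerivAt_slice_fst (hf.differentiableAt (x, t))).deriv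

theorem dt_eq_fderiv (hf : JointContDiff (n + 1) f) :
    dt f = fun x t => fderiv ℝ (fun p : ℝ × ℝ => f p.1 p.2) (x, t) (0, 1) :=
  funext₂ fun x t => (hasDerivAt_slice_snd (hf.differentiableAt (x, t))).deriv

theorem contDiff_fderiv (hf : JointContDiff (n + 1) f) :
    ContDiff ℝ n (fderiv ℝ fun p : ℝ × ℝ => f p.1 p.2) :=
  ContDiff.fderiv_right hf (by norm_cast)

protected theorem dx (hf : JointContDiff (n + 1) f) : JointContDiff n (dx f) := by
  rw [hf.dx_eq_fderiv]
  exact hf.contDiff_fderiv.clm_apply contDiff_const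

theorem dt_dx_comm (hf : JointContDiff 2 f) : dt (_root_.dx f) = _root_.dx (dt f) := by
  funext x t
  have hdiff : DifferentiableAt ℝ (fderiv ℝ fun p : ℝ × ℝ => f p.1 p.2) (x, t) :=
    hf.contDiff_fderiv.differentiable (by simp) (x, t)
  have hsymm : IsSymmSndFDerivAt ℝ (fun p : ℝ × ℝ => f p.1 p.2) (x, t) :=
    (ContDiff.contDiffAt hf).isSymmSndFDerivAt (by simp)
  have hdt := ((hasDerivAt_slice_snd hdiff).clm_apply (hasDerivAt_const t (1, 0))).deriv
  have hdx := ((hasDerivAt_slice_fst hdiff).clm_apply (hasDerivAt_const x (0, 1))).deriv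
  simp only [map_zero, add_zero] at hdt hdx
  rw [hf.dx_eq_fderiv, hf.dt_eq_fderiv]
  exact hdt.trans ((hsymm.eq (0, 1) (1, 0)).trans hdx.symm)

theorem const_mul_rpow_const (hf : JointContDiff n f) (hf₀ : ∀ x t, f x t ≠ 0) (c p : ℝ) :
    JointContDiff n fun x t => c * f x t ^ p :=
  contDiff_const.mul (ContDiff.rpow_const_of_ne hf fun q => hf₀ q.1 q.2)

end JointContDiff

section InverseSquare

variable {w h : ℝ → ℝ → ℝ} {c : ℝ} {n : ℕ} (h₀ : ∀ x t, h x t ≠ 0)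
  (hwx : dx w = fun x t => c / h x t ^ 2)

include h₀ hwx

theorem dt_dx_of_dx_eq_div_sq (hh : JointContDiff (n + 1) h) :
    dt (dx w) = fun x t => -2 * c * dt h x t / h x t ^ 3 := by
  rw [hwx]
  refine funext₂ fun x t => HasDerivAt.deriv <|
    (hasDerivAt_div_pow (hasDerivAt_const t c) (hh.hasDerivAt_dt x t) (h₀ x t) 2).congr_deriv ?_
  push_cast
  ring

theorem dx_dx_of_dx_eq_div_sq (hh : JointContDiff (n + 1) h) :
    dx (dx w) = fun x t => c * (-2 * dx h x t / h x t ^ 3) := by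
  rw [hwx]
  refine funext₂ fun x t => HasDerivAt.deriv <|
    (hasDerivAt_div_pow (hasDerivAt_const x c) (hh.hasDerivAt_dx x t) (h₀ x t) 2).congr_deriv ?_
  push_cast
  ring

theorem dx_dx_dx_of_dx_eq_div_sq (hh : JointContDiff (n + 2) h) :
    dx (dx (dx w)) = fun x t =>
      c * (-2 * dx (dx h) x t / h x t ^ 3 + 6 * dx h x t ^ 2 / h x t ^ 4) := by
  rw [dx_dx_of_dx_eq_div_sq h₀ hwx hh]
  funext x t
  have hh₀ := hh.hasDerivAt_dx x t
  have hh₁ := hh.dx.hasDerivAt_dx x t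
  refine HasDerivAt.deriv <|
    ((hasDerivAt_div_pow (hh₁.const_mul (-2)) hh₀ (h₀ x t) 3).const_mul c).congr_deriv ?_
  push_cast
  ring

theorem dx_dx_dx_dx_of_dx_eq_div_sq (hh : JointContDiff (n + 3) h) :
    dx (dx (dx (dx w))) = fun x t =>
      c * (-2 * dx (dx (dx h)) x t / h x t ^ 3 + 18 * (dx h x t * dx (dx h) x t) / h x t ^ 4
        - 24 * dx h x t ^ 3 / h x t ^ 5) := by
  rw [dx_dx_dx_of_dx_eq_div_sq h₀ hwx hh]
  funext x t
  have hh₀ := hh.hasDerivAt_dx x t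
  have hh₁ := hh.dx.hasDerivAt_dx x t
  have hh₂ := hh.dx.dx.hasDerivAt_dx x t
  refine HasDerivAt.deriv <| HasDerivAt.congr_deriv (HasDerivAt.const_mul c <|
    (hasDerivAt_div_pow (hh₂.const_mul (-2)) hh₀ (h₀ x t) 3).fun_add
      (hasDerivAt_div_pow ((hh₁.fun_pow 2).const_mul 6) hh₀ (h₀ x t) 4)) ?_
  push_cast
  ring

theorem dx_dx_dx_dx_dx_of_dx_eq_div_sq (hh : JointContDiff (n + 4) h) :
    dx (dx (dx (dx (dx w)))) = fun x t =>
      c * (-2 * dx (dx (dx (dx h))) x t / h x t ^ 3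
        + 24 * (dx h x t * dx (dx (dx h)) x t) / h x t ^ 4
        + 18 * dx (dx h) x t ^ 2 / h x t ^ 4
        - 144 * (dx h x t ^ 2 * dx (dx h) x t) / h x t ^ 5
        + 120 * dx h x t ^ 4 / h x t ^ 6) := by
  rw [dx_dx_dx_dx_of_dx_eq_div_sq h₀ hwx hh]
  funext x t
  have hh₀ := hh.hasDerivAt_dx x t
  have hh₁ := hh.dx.hasDerivAt_dx x t
  have hh₂ := hh.dx.dx.hasDerivAt_dx x t
  have hh₃ := hh.dx.dx.dx.hasDerivAt_dx x t
  refine HasDerivAt.deriv <| HasDerivAt.congr_deriv (HasDerivAt.const_mul c <|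
    ((hasDerivAt_div_pow (hh₃.const_mul (-2)) hh₀ (h₀ x t) 3).fun_add
      (hasDerivAt_div_pow ((hh₁.fun_mul hh₂).const_mul 18) hh₀ (h₀ x t) 4)).fun_sub
      (hasDerivAt_div_pow ((hh₁.fun_pow 3).const_mul 24) hh₀ (h₀ x t) 5)) ?_
  push_cast
  ring

end InverseSquare

section KupershmidtFluxes

/-- The right-hand side of the 4th potential Kupershmidt equation rewritten in terms of `h`, where
`w_x = (16/9) h⁻²`. -/
noncomputable def kup4Flux (β : ℝ) (h : ℝ → ℝ → ℝ) (x t : ℝ) : ℝ :=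
  (16 / 9) * (-2 * dx (dx (dx (dx h))) x t / h x t ^ 3
    + 4 * (dx h x t * dx (dx (dx h)) x t) / h x t ^ 4
    + 3 * dx (dx h) x t ^ 2 / h x t ^ 4
    - 4 * (dx h x t ^ 2 * dx (dx h) x t) / h x t ^ 5)
  - (5 * β / 6) * (2 * dx (dx h) x t / h x t + dx h x t ^ 2 / h x t ^ 2)
  - (5 * β ^ 2 / 64) * h x t ^ 2

/-- The right-hand side of the 5th potential Kupershmidt equation for `q`, written in terms of
`h = q_x`, so that the `x`-differentiated equation is the conservation law
`h_t = ∂_x (kup5Flux β h)`. -/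
noncomputable def kup5Flux (β : ℝ) (h : ℝ → ℝ → ℝ) (x t : ℝ) : ℝ :=
  dx (dx (dx (dx h))) x t
  - 5 * dx h x t * dx (dx (dx h)) x t / h x t
  + 5 * (dx h x t) ^ 2 * dx (dx h) x t / (h x t) ^ 2
  + (15 * β / 32) * (h x t) ^ 2 * dx (dx h) x t
  - (15 * β / 32) * h x t * (dx h x t) ^ 2
  + (9 * β ^ 2 / 1024) * (h x t) ^ 5

variable {β : ℝ} {w h : ℝ → ℝ → ℝ} {n : ℕ} (h₀ : ∀ x t, h x t ≠ 0)

include h₀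

theorem dt_eq_kup4Flux (hh : JointContDiff (n + 4) h)
    (hwx : dx w = fun x t => (16 / 9) / h x t ^ 2) (heq : Kup4 β w) : dt w = kup4Flux β h := by
  funext x t
  rw [heq x t, dx_dx_dx_dx_dx_of_dx_eq_div_sq h₀ hwx hh, dx_dx_dx_dx_of_dx_eq_div_sq h₀ hwx hh,
    dx_dx_dx_of_dx_eq_div_sq h₀ hwx hh, dx_dx_of_dx_eq_div_sq h₀ hwx hh, hwx, kup4Flux]
  have hne := h₀ x t
  field_simp
  ring

theorem dx_kup4Flux (hh : JointContDiff (n + 5) h) (x t : ℝ) :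
    dx (kup4Flux β h) x t =
      (16 / 9) * (-2 * dx (dx (dx (dx (dx h)))) x t / h x t ^ 3
        + 10 * (dx h x t * dx (dx (dx (dx h))) x t + dx (dx h) x t * dx (dx (dx h)) x t)
          / h x t ^ 4
        - 20 * (dx h x t ^ 2 * dx (dx (dx h)) x t + dx h x t * dx (dx h) x t ^ 2) / h x t ^ 5
        + 20 * (dx h x t ^ 3 * dx (dx h) x t) / h x t ^ 6)
      - (5 * β / 3) * (dx (dx (dx h)) x t / h x t - dx h x t ^ 3 / h x t ^ 3)
      - (5 * β ^ 2 / 32) * (h x t * dx h x t) := by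
  have hh₀ := hh.hasDerivAt_dx x t
  have hh₁ := hh.dx.hasDerivAt_dx x t
  have hh₂ := hh.dx.dx.hasDerivAt_dx x t
  have hh₃ := hh.dx.dx.dx.hasDerivAt_dx x t
  have hh₄ := hh.dx.dx.dx.dx.hasDerivAt_dx x t
  have hβ₀ :=
    (((hasDerivAt_div_pow (hh₄.const_mul (-2)) hh₀ (h₀ x t) 3).fun_add
      (hasDerivAt_div_pow ((hh₁.fun_mul hh₃).const_mul 4) hh₀ (h₀ x t) 4)).fun_add
      (hasDerivAt_div_pow ((hh₂.fun_pow 2).const_mul 3) hh₀ (h₀ x t) 4)).fun_sub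
      (hasDerivAt_div_pow (((hh₁.fun_pow 2).fun_mul hh₂).const_mul 4) hh₀ (h₀ x t) 5)
  have hβ₁ :=
    ((hh₂.const_mul 2).fun_div hh₀ (h₀ x t)).fun_add
      (hasDerivAt_div_pow (hh₁.fun_pow 2) hh₀ (h₀ x t) 2)
  have hβ₂ := (hh₀.fun_pow 2).const_mul (5 * β ^ 2 / 64)
  refine HasDerivAt.deriv <| HasDerivAt.congr_deriv
    (((hβ₀.const_mul (16 / 9)).fun_sub (hβ₁.const_mul (5 * β / 6))).fun_sub hβ₂) ?_
  have hne := h₀ x t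
  push_cast
  field_simp
  ring

theorem dx_kup5Flux (hh : JointContDiff (n + 5) h) (x t : ℝ) :
    dx (kup5Flux β h) x t =
      dx (dx (dx (dx (dx h)))) x t
      - 5 * (dx h x t * dx (dx (dx (dx h))) x t + dx (dx h) x t * dx (dx (dx h)) x t) / h x t
      + 10 * (dx h x t ^ 2 * dx (dx (dx h)) x t + dx h x t * dx (dx h) x t ^ 2) / h x t ^ 2
      - 10 * (dx h x t ^ 3 * dx (dx h) x t) / h x t ^ 3
      + (15 * β / 32) * (h x t ^ 2 * dx (dx (dx h)) x t - dx h x t ^ 3)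
      + (45 * β ^ 2 / 1024) * (h x t ^ 4 * dx h x t) := by
  have hh₀ := hh.hasDerivAt_dx x t
  have hh₁ := hh.dx.hasDerivAt_dx x t
  have hh₂ := hh.dx.dx.hasDerivAt_dx x t
  have hh₃ := hh.dx.dx.dx.hasDerivAt_dx x t
  have hh₄ := hh.dx.dx.dx.dx.hasDerivAt_dx x t
  have hβ₀ :=
    (hh₄.fun_sub (((hh₁.const_mul 5).fun_mul hh₃).fun_div hh₀ (h₀ x t))).fun_add
      (hasDerivAt_div_pow (((hh₁.fun_pow 2).const_mul 5).fun_mul hh₂) hh₀ (h₀ x t) 2)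
  have hβ₁ := ((hh₀.fun_pow 2).const_mul (15 * β / 32)).fun_mul hh₂
  have hβ₁' := (hh₀.const_mul (15 * β / 32)).fun_mul (hh₁.fun_pow 2)
  have hβ₂ := (hh₀.fun_pow 5).const_mul (9 * β ^ 2 / 1024)
  refine HasDerivAt.deriv <| HasDerivAt.congr_deriv
    (((hβ₀.fun_add hβ₁).fun_sub hβ₁').fun_add hβ₂) ?_
  have hne := h₀ x t
  push_cast
  field_simp
  ring

theorem dx_kup4Flux_eq_dx_kup5Flux (hh : JointContDiff (n + 5) h) (x t : ℝ) :
    dx (kup4Flux β h) x t = -2 * (16 / 9) * dx (kup5Flux β h) x t / h x t ^ 3 := by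
  rw [dx_kup4Flux h₀ hh, dx_kup5Flux h₀ hh]
  have hne := h₀ x t
  field_simp
  ring

end KupershmidtFluxes

theorem kup4_to_kup5_potentialisation_general {β : ℝ} {w h : ℝ → ℝ → ℝ}
    (hw : JointContDiff 2 w) (hh : JointContDiff 5 h)
    (hwx : ∀ x t, dx w x t * h x t ^ 2 = 16 / 9) (heq : Kup4 β w) (x t : ℝ) :
    dt h x t = dx (kup5Flux β h) x t := by
  have h₀ (x t : ℝ) : h x t ≠ 0 := by
    intro hzero
    have := hwx x t
    norm_num [hzero] at this
  have hdx : dx w = fun x t => (16 / 9) / h x t ^ 2 :=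
    funext₂ fun x t => eq_div_of_mul_eq (pow_ne_zero 2 (h₀ x t)) (hwx x t)
  have hmixed : -2 * (16 / 9) * dt h x t / h x t ^ 3
      = -2 * (16 / 9) * dx (kup5Flux β h) x t / h x t ^ 3 :=
    calc -2 * (16 / 9) * dt h x t / h x t ^ 3
      _ = dt (dx w) x t := by rw [dt_dx_of_dx_eq_div_sq h₀ hdx hh]
      _ = dx (dt w) x t := by rw [hw.dt_dx_comm]
      _ = dx (kup4Flux β h) x t := by rw [dt_eq_kup4Flux h₀ hh hdx heq]
      _ = -2 * (16 / 9) * dx (kup5Flux β h) x t / h x t ^ 3 :=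
        dx_kup4Flux_eq_dx_kup5Flux h₀ hh x t
  have hne := h₀ x t
  field_simp at hmixed
  linarith

/-- If `w` solves the 4th potential Kupershmidt equation with `w_x > 0`, then
`h = -(4/3)w_x^{-1/2}` solves the `x`-differentiated 5th potential Kupershmidt equation. -/
theorem kup4_to_kup5_potentialisation
    (β : ℝ)
    (w : ℝ → ℝ → ℝ)
    (hw : ContDiff ℝ (⊤ : ℕ∞) (fun p : ℝ × ℝ => w p.1 p.2))
    (hwx : ∀ x t, 0 < dx w x t)
    (heq : Kup4 β w)
    (h : ℝ → ℝ → ℝ)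
    (hh : ∀ x t, h x t = -(4/3) * (dx w x t) ^ (-(1/2) : ℝ)) :
    ∀ x t, dt h x t =
      dx (fun x t =>
        dx (dx (dx (dx h))) x t
        - 5 * dx h x t * dx (dx (dx h)) x t / h x t
        + 5 * (dx h x t)^2 * dx (dx h) x t / (h x t)^2
        + (15*β/32) * (h x t)^2 * dx (dx h) x t
        - (15*β/32) * h x t * (dx h x t)^2
        + (9*β^2/1024) * (h x t)^5) x t := by
  have hw' (n : ℕ) : JointContDiff n w := hw.of_le (by exact_mod_cast le_top)
  have hh' : JointContDiff 5 h := funext₂ hh ▸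
    (hw' 6).dx.const_mul_rpow_const (fun x t => (hwx x t).ne') _ _
  refine kup4_to_kup5_potentialisation_general (hw' 2) hh' (fun x t => ?_) heq
  rw [hh, self_mul_const_mul_rpow_neg_half_sq (hwx x t)]
  norm_num
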